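/- (Ornstein–Shields inequality) For any stationary ergodic source with entropy rate H over a finite alphabet and any one-to-one code sequence γ, almost surely liminf_n ||γ(X_1,...,X_n)||/n ≥ H. -/

import Mathlib

open MeasureTheory Filter ENNReal

set_option linter.unusedSectionVars false

namespace OS
variable {α : Type*}

def T (x : ℕ → α) : ℕ → α := fun n => x (n + 1)

lemma T_iter (n : ℕ) (x : ℕ → α) : T^[n] x = fun i => x (i + n) := by
  induction n generalizing x with
  | zero => rfl
  | succ n ih =>
    rw [Function.iterate_succ_apply, ih]
    funext i
    simp [T, add_assoc]

def app (n : ℕ) (w : Fin n → α) (x : ℕ → α) : ℕ → α :=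
  fun i => if h : i < n then w ⟨i, h⟩ else x (i - n)

lemma T_app (n : ℕ) (w : Fin n → α) (x : ℕ → α) : T^[n] (app n w x) = x := by
  rw [T_iter]; funext i; simp [app]

lemma app_res (n : ℕ) (w : Fin n → α) (x : ℕ → α) : (fun i : Fin n => app n w x i) = w := by
  funext i; simp [app]

lemma app_app (n m : ℕ) (u : Fin n → α) (v : Fin m → α) (x : ℕ → α) :
    app n u (app m v x) = app (n + m) (Fin.append u v) x := by
  funext i
  unfold app
  by_cases h : i < n
  · have h2 : i < n + m := by omega
    simp only [h, h2, dite_true]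
    have : (⟨i, h2⟩ : Fin (n+m)) = Fin.castAdd m ⟨i, h⟩ := rfl
    rw [this, Fin.append_left]
  · by_cases h3 : i < n + m
    · have h2 : i - n < m := by omega
      simp only [h, h2, h3, dite_true, dite_false]
      have : (⟨i, h3⟩ : Fin (n+m)) = Fin.natAdd n ⟨i - n, h2⟩ := by
        ext; simp; omega
      rw [this, Fin.append_right]
    · have h2 : ¬ i - n < m := by omega
      simp only [h, h2, h3, dite_false]
      congr 1; omega

variable [Fintype α]

def S (n : ℕ) (f : (ℕ → α) → ℝ) (x : ℕ → α) : ℝ := ∑ w : Fin n → α, f (app n w x)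

lemma S_add (n m : ℕ) (f : (ℕ → α) → ℝ) (x : ℕ → α) : S (n + m) f x = S m (S n f) x := by
  unfold S
  rw [← (Fin.appendEquiv n m).sum_comp, Fintype.sum_prod_type_right]
  refine Finset.sum_congr rfl fun v _ => Finset.sum_congr rfl fun u _ => ?_
  rw [app_app]; rfl

lemma S_mul (n : ℕ) (f g : (ℕ → α) → ℝ) (x : ℕ → α) :
    S n (fun y => f y * g (T^[n] y)) x = S n f x * g x := by
  unfold S
  simp only [T_app, Finset.sum_mul]

variable [MeasurableSpace α] [MeasurableSingletonClass α]

noncomputable def pw (μ : Measure (ℕ → α)) (n : ℕ) (w : Fin n → α) : ℝ :=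
  (μ {y | ∀ i : Fin n, y i = w i}).toReal

noncomputable def P (μ : Measure (ℕ → α)) (n : ℕ) (x : ℕ → α) : ℝ := pw μ n (fun i => x i)

lemma meas_res (n : ℕ) : Measurable (fun x : ℕ → α => fun i : Fin n => x i) :=
  measurable_pi_lambda _ fun _ => measurable_pi_apply _

lemma meas_P (μ : Measure (ℕ → α)) (n : ℕ) : Measurable (P μ n) :=
  (Measurable.of_discrete (f := pw μ n)).comp (meas_res n)

lemma pw_map (μ : Measure (ℕ → α)) [IsProbabilityMeasure μ] (n : ℕ) (w : Fin n → α) :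
    pw μ n w = (μ.map (fun x : ℕ → α => fun i : Fin n => x i)).real {w} := by
  rw [Measure.real, Measure.map_apply (meas_res n) (measurableSet_singleton w), pw]
  congr 2
  ext y
  simp [funext_iff]

lemma integral_res (μ : Measure (ℕ → α)) [IsProbabilityMeasure μ] (n : ℕ) (f : (Fin n → α) → ℝ) :
    ∫ x, f (fun i : Fin n => x i) ∂μ = ∑ w, pw μ n w * f w := by
  have : IsProbabilityMeasure (μ.map (fun x : ℕ → α => fun i : Fin n => x i)) :=
    Measure.isProbabilityMeasure_map (meas_res n).aemeasurable
  rw [← integral_map (f := f) (meas_res n).aemeasurable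
    (Measurable.of_discrete.aestronglyMeasurable), integral_fintype]
  · simp [pw_map]
  · exact Integrable.of_finite

lemma sum_pw (μ : Measure (ℕ → α)) [IsProbabilityMeasure μ] (n : ℕ) : ∑ w, pw μ n w = 1 := by
  have := integral_res μ n (fun _ => 1)
  simpa using this.symm

lemma pw_nonneg (μ : Measure (ℕ → α)) (n : ℕ) (w : Fin n → α) : 0 ≤ pw μ n w := toReal_nonneg

lemma S_P (μ : Measure (ℕ → α)) [IsProbabilityMeasure μ] (n : ℕ) (x) : S n (P μ n) x = 1 := by
  unfold S P
  simp only [app_res]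
  exact sum_pw μ n

noncomputable def q (μ : Measure (ℕ → α)) (v : ℕ → ℝ) : ℕ → (ℕ → α) → ℝ
  | 0, _ => 1
  | N + 1, x => (1 / (2 * (Fintype.card α : ℝ))) * q μ v N (T x) +
      ∑ k : Fin (N + 1), v (k + 1) * (P μ (k + 1) x * q μ v (N - k) (T^[k + 1] x))
termination_by N => N
decreasing_by all_goals omega

lemma q_local (μ : Measure (ℕ → α)) (v : ℕ → ℝ) (N : ℕ) : ∀ x y : ℕ → α,
    (∀ i < N, x i = y i) → q μ v N x = q μ v N y := by
  induction N using Nat.strong_induction_on with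
  | _ N ih =>
    intro x y h
    cases N with
    | zero => simp [q]
    | succ N =>
      rw [q, q]
      congr 1
      · rw [ih N (by omega) (T x) (T y)]
        intro i hi; exact h _ (by omega)
      · refine Finset.sum_congr rfl fun k _ => ?_
        rw [ih (N - k) (by omega) (T^[k+1] x) (T^[k+1] y)]
        · congr 2
          unfold P
          congr 1
          funext i
          exact h _ (by omega)
        · intro i hi
          rw [T_iter, T_iter]; exact h _ (by omega)

lemma q_nonneg [Nonempty α] (μ : Measure (ℕ → α)) (v : ℕ → ℝ) (hv : ∀ n, 0 ≤ v n) (N : ℕ) :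
    ∀ x : ℕ → α, 0 < q μ v N x := by
  induction N using Nat.strong_induction_on with
  | _ N ih =>
    intro x
    cases N with
    | zero => simp [q]
    | succ N =>
      rw [q]
      have hc : (0:ℝ) < Fintype.card α := by exact_mod_cast Fintype.card_pos
      have := ih N (by omega) (T x)
      refine add_pos_of_pos_of_nonneg (by positivity) ?_
      refine Finset.sum_nonneg fun k _ => ?_
      have := ih (N - k) (by omega) (T^[k+1] x)
      exact mul_nonneg (hv _) (mul_nonneg (pw_nonneg _ _ _) this.le)

lemma q_ge_letter (μ : Measure (ℕ → α)) [Nonempty α] (v : ℕ → ℝ) (hv : ∀ n, 0 ≤ v n) (N : ℕ)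
    (x : ℕ → α) : (1 / (2 * (Fintype.card α : ℝ))) * q μ v N (T x) ≤ q μ v (N+1) x := by
  conv_rhs => rw [q]
  refine le_add_of_nonneg_right ?_
  refine Finset.sum_nonneg fun k _ => ?_
  have := q_nonneg μ v hv (N - k) (T^[k+1] x)
  exact mul_nonneg (hv _) (mul_nonneg (pw_nonneg _ _ _) this.le)

lemma q_ge_block (μ : Measure (ℕ → α)) [Nonempty α] (v : ℕ → ℝ) (hv : ∀ n, 0 ≤ v n) (N n : ℕ)
    (h1 : 1 ≤ n) (h2 : n ≤ N)
    (x : ℕ → α) : (v n * P μ n x) * q μ v (N - n) (T^[n] x) ≤ q μ v N x := by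
  obtain ⟨k, rfl⟩ : ∃ k, n = k + 1 := ⟨n - 1, by omega⟩
  obtain ⟨N, rfl⟩ : ∃ k, N = k + 1 := ⟨N - 1, by omega⟩
  conv_rhs => rw [q]
  have hc : (0:ℝ) < Fintype.card α := by exact_mod_cast Fintype.card_pos
  have := q_nonneg μ v hv N (T x)
  refine le_add_of_nonneg_of_le (by positivity) ?_
  have := Finset.single_le_sum (s := Finset.univ) (f := fun k : Fin (N+1) =>
    v (k + 1) * (P μ (k + 1) x * q μ v (N - k) (T^[k + 1] x))) (fun k _ => by
      have := q_nonneg μ v hv (N - k) (T^[k+1] x)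
      exact mul_nonneg (hv _) (mul_nonneg (pw_nonneg _ _ _) this.le))
      (Finset.mem_univ (⟨k, by omega⟩ : Fin (N+1)))
  refine le_trans (le_of_eq ?_) this
  have e : N + 1 - (k+1) = N - k := by omega
  simp only [e]; ring

lemma S_q_le (μ : Measure (ℕ → α)) [IsProbabilityMeasure μ] [Nonempty α] (v : ℕ → ℝ)
    (hv : ∀ n, 0 ≤ v n) (hs : ∀ n, ∑ k ∈ Finset.range n, v (k + 1) ≤ 1 / 2) (N : ℕ) :
    ∀ x : ℕ → α, S N (q μ v N) x ≤ 1 := by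
  induction N using Nat.strong_induction_on with
  | _ N ih =>
    intro x
    cases N with
    | zero => simp [S, q]
    | succ N =>
      have hc : (0:ℝ) < Fintype.card α := by exact_mod_cast Fintype.card_pos
      have e : S (N+1) (q μ v (N+1)) x = (1 / (2 * (Fintype.card α : ℝ))) *
          S (N+1) (fun y => q μ v N (T y)) x + ∑ k : Fin (N + 1), v (k + 1) *
            S (N+1) (fun y => P μ (k + 1) y * q μ v (N - k) (T^[k + 1] y)) x := by
        unfold S
        simp only [Finset.mul_sum]
        rw [Finset.sum_comm, ← Finset.sum_add_distrib]
        refine Finset.sum_congr rfl fun w _ => ?_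
        rw [q]
      have e1 : S (N+1) (fun y => q μ v N (T y)) x ≤ Fintype.card α := by
        rw [add_comm, S_add]
        have : S 1 (fun y => q μ v N (T y)) = fun y => Fintype.card α * q μ v N y := by
          funext y
          have := S_mul 1 (fun _ => 1) (q μ v N) y
          simp only [one_mul, Function.iterate_one] at this
          rw [this]
          simp [S]
        rw [this]
        have h := ih N (by omega) x
        have : S N (fun y => Fintype.card α * q μ v N y) x = Fintype.card α * S N (q μ v N) x := by
          simp [S, Finset.mul_sum]
        rw [this]
        nlinarith
      have e2 : ∀ k : Fin (N+1),
          S (N+1) (fun y => P μ (k + 1) y * q μ v (N - k) (T^[k + 1] y)) x ≤ 1 := by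
        rintro ⟨k, hk⟩
        have hN : N + 1 = (k + 1) + (N - k) := by omega
        simp only
        rw [hN, S_add]
        have : S (k+1) (fun y => P μ (k + 1) y * q μ v (N - k) (T^[k + 1] y))
            = q μ v (N - k) := by
          funext y
          rw [S_mul, S_P, one_mul]
        rw [this]
        exact ih _ (by omega) x
      rw [e]
      have h1 : (1 / (2 * (Fintype.card α : ℝ))) *
          S (N+1) (fun y => q μ v N (T y)) x ≤ 1/2 := by
        calc _ ≤ (1 / (2 * (Fintype.card α : ℝ))) * Fintype.card α := by gcongr
          _ = 1/2 := by field_simp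
      have h2 : ∑ k : Fin (N + 1), v (k + 1) *
            S (N+1) (fun y => P μ (k + 1) y * q μ v (N - k) (T^[k + 1] y)) x ≤ 1/2 := by
        calc _ ≤ ∑ k : Fin (N + 1), v (k + 1) :=
              Finset.sum_le_sum fun k _ => mul_le_of_le_one_right (hv _) (e2 k)
          _ = ∑ k ∈ Finset.range (N+1), v (k + 1) := by
              rw [← Fin.sum_univ_eq_sum_range (fun k => v (k+1))]
          _ ≤ _ := hs _
      linarith

/-- bad set -/
def bad (μ : Measure (ℕ → α)) (v : ℕ → ℝ) (c : ℝ) (L : ℕ) : Set (ℕ → α) :=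
  {x | ∀ n, 1 ≤ n → n ≤ L → v n * P μ n x < (2:ℝ) ^ (-(c * n))}

lemma q_letters (μ : Measure (ℕ → α)) [Nonempty α] (v : ℕ → ℝ) (hv : ∀ n, 0 ≤ v n) (N : ℕ) :
    ∀ x : ℕ → α, -Real.logb 2 (q μ v N x) ≤ Real.logb 2 (2 * (Fintype.card α : ℝ)) * N := by
  have hc : (0:ℝ) < Fintype.card α := by exact_mod_cast Fintype.card_pos
  induction N with
  | zero => intro x; simp [q]
  | succ N ih =>
    intro x
    have h1 := q_ge_letter μ v hv N x
    have h2 := q_nonneg μ v hv N (T x)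
    have h3 := Real.logb_le_logb_of_le (b := 2) (by norm_num) (by positivity) h1
    rw [Real.logb_mul (by positivity) (by positivity), one_div, Real.logb_inv] at h3
    have := ih (T x)
    push_cast
    linarith

open Classical in
lemma q_lower (μ : Measure (ℕ → α)) [Nonempty α] (v : ℕ → ℝ) (hv : ∀ n, 0 ≤ v n) (c : ℝ)
    (hc0 : 0 ≤ c) (L N : ℕ) :
    ∀ x : ℕ → α, -Real.logb 2 (q μ v N x) ≤ c * N + Real.logb 2 (2 * (Fintype.card α : ℝ)) *
      (∑ i ∈ Finset.range N, (bad μ v c L).indicator 1 (T^[i] x) + L) := by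
  have hc : (1:ℝ) ≤ Fintype.card α := by exact_mod_cast Fintype.card_pos
  have hB : 0 ≤ Real.logb 2 (2 * (Fintype.card α : ℝ)) :=
    Real.logb_nonneg (by norm_num) (by linarith)
  set B := Real.logb 2 (2 * (Fintype.card α : ℝ)) with hBdef
  have hind : ∀ y : ℕ → α, (0:ℝ) ≤ (bad μ v c L).indicator 1 y :=
    fun y => Set.indicator_nonneg (fun _ _ => zero_le_one) _
  induction N using Nat.strong_induction_on with
  | _ N ih =>
    intro x
    by_cases hNL : N < L
    · have := q_letters μ v hv N x
      refine this.trans ?_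
      have h1 : (N:ℝ) ≤ L := by exact_mod_cast hNL.le
      have h2 : (0:ℝ) ≤ ∑ i ∈ Finset.range N, (bad μ v c L).indicator 1 (T^[i] x) :=
        Finset.sum_nonneg fun i _ => hind _
      have h3 : (0:ℝ) ≤ c * N := by positivity
      have : B * N ≤ B * (∑ i ∈ Finset.range N, (bad μ v c L).indicator 1 (T^[i] x) + L) :=
        mul_le_mul_of_nonneg_left (by linarith) hB
      linarith
    · by_cases hx : x ∈ bad μ v c L
      · cases N with
        | zero =>
          simp only [q]
          simp
          positivity
        | succ N =>
          have h1 := q_ge_letter μ v hv N x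
          have h2 := q_nonneg μ v hv N (T x)
          have h3 := Real.logb_le_logb_of_le (b := 2) (by norm_num) (by positivity) h1
          rw [Real.logb_mul (by positivity) (by positivity), one_div, Real.logb_inv] at h3
          have := ih N (by omega) (T x)
          rw [Finset.sum_range_succ']
          simp only [Function.iterate_zero, id, Set.indicator_of_mem hx, Pi.one_apply,
            Function.iterate_succ_apply]
          push_cast
          nlinarith
      · simp only [bad, Set.mem_ofPred_eq, not_forall, not_lt] at hx
        obtain ⟨n, hn1, hnL, hn⟩ := hx
        have hnN : n ≤ N := by omega
        obtain ⟨m, rfl⟩ : ∃ m, N = n + m := ⟨N - n, by omega⟩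
        have h1 := q_ge_block μ v hv (n + m) n hn1 hnN x
        rw [Nat.add_sub_cancel_left] at h1
        have h2 := q_nonneg μ v hv m (T^[n] x)
        have h4 : (2:ℝ) ^ (-(c * n)) * q μ v m (T^[n] x) ≤ q μ v (n+m) x :=
          (mul_le_mul_of_nonneg_right hn h2.le).trans h1
        have h3 := Real.logb_le_logb_of_le (b := 2) (by norm_num) (by positivity) h4
        rw [Real.logb_mul (by positivity) (by positivity),
          Real.logb_rpow (by norm_num) (by norm_num)] at h3
        have := ih m (by omega) (T^[n] x)
        rw [Finset.sum_range_add]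
        have h5 : (0:ℝ) ≤ ∑ i ∈ Finset.range n, (bad μ v c L).indicator 1 (T^[i] x) :=
          Finset.sum_nonneg fun i _ => hind _
        simp only [← Function.iterate_add_apply, add_comm _ n] at this
        push_cast
        nlinarith [mul_nonneg hB h5]

lemma meas_bad (μ : Measure (ℕ → α)) (v : ℕ → ℝ) (c : ℝ) (L : ℕ) :
    MeasurableSet (bad μ v c L) := by
  have : bad μ v c L = ⋂ n : ℕ, ⋂ (_ : 1 ≤ n), ⋂ (_ : n ≤ L),
      {x | v n * P μ n x < (2:ℝ) ^ (-(c * n))} := by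
    ext x; simp [bad]
  rw [this]
  refine MeasurableSet.iInter fun n => MeasurableSet.iInter fun _ => MeasurableSet.iInter fun _ => ?_
  exact measurableSet_lt ((meas_P μ n).const_mul _) measurable_const

lemma gibbs {ι : Type*} [Fintype ι] (p q : ι → ℝ) (hp : ∀ i, 0 ≤ p i) (hq : ∀ i, 0 < q i)
    (hp1 : ∑ i, p i = 1) (hq1 : ∑ i, q i ≤ 1) :
    -∑ i, p i * Real.logb 2 (p i) ≤ ∑ i, p i * -Real.logb 2 (q i) := by
  have hl : 0 < Real.log 2 := Real.log_pos (by norm_num)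
  have key : ∀ i, -(p i * Real.logb 2 (p i)) ≤
      p i * -Real.logb 2 (q i) + (q i - p i) / Real.log 2 := by
    intro i
    rcases (hp i).eq_or_lt with h | h
    · rw [← h]
      have := hq i
      simp
      positivity
    · have h1 := Real.log_le_sub_one_of_pos (div_pos (hq i) h)
      rw [Real.log_div (hq i).ne' h.ne'] at h1
      have h2 : p i * (Real.log (q i) - Real.log (p i)) ≤ q i - p i := by
        calc _ ≤ p i * (q i / p i - 1) := mul_le_mul_of_nonneg_left h1 h.le
          _ = _ := by field_simp
      have h3 : p i * (Real.log (q i) - Real.log (p i)) / Real.log 2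
          ≤ (q i - p i) / Real.log 2 := by gcongr
      have h4 : p i * (Real.log (q i) - Real.log (p i)) / Real.log 2 =
        p i * (Real.logb 2 (q i)) - p i * (Real.logb 2 (p i)) := by
        simp only [Real.logb]; ring
      linarith
  rw [← Finset.sum_neg_distrib]
  refine (Finset.sum_le_sum fun i _ => key i).trans ?_
  rw [Finset.sum_add_distrib, ← Finset.sum_div, Finset.sum_sub_distrib, hp1]
  have : (∑ i, q i - 1) / Real.log 2 ≤ 0 := div_nonpos_of_nonpos_of_nonneg (by linarith) hl.le
  linarith

lemma entropy_le (μ : Measure (ℕ → α)) [IsProbabilityMeasure μ] [Nonempty α]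
    (hT : MeasurePreserving (T : (ℕ → α) → _) μ μ) (v : ℕ → ℝ)
    (hv : ∀ n, 0 ≤ v n) (hs : ∀ n, ∑ k ∈ Finset.range n, v (k + 1) ≤ 1 / 2) (c : ℝ)
    (hc0 : 0 ≤ c) (L N : ℕ) :
    -∑ w, pw μ N w * Real.logb 2 (pw μ N w) ≤ c * N + Real.logb 2 (2 * (Fintype.card α : ℝ)) *
      (N * μ.real (bad μ v c L) + L) := by
  set x0 : ℕ → α := fun _ => Classical.arbitrary α
  set qw : (Fin N → α) → ℝ := fun w => q μ v N (app N w x0)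
  have h1 := gibbs (pw μ N) qw (pw_nonneg μ N) (fun w => q_nonneg μ v hv N _) (sum_pw μ N)
    (S_q_le μ v hv hs N x0)
  refine h1.trans ?_
  rw [← integral_res μ N (fun w => -Real.logb 2 (qw w))]
  have hloc : ∀ x : ℕ → α, qw (fun i : Fin N => x i) = q μ v N x := fun x =>
    q_local μ v N _ _ (fun i hi => by simp [app, hi])
  have hmp := fun i : ℕ => hT.iterate i
  have hind : ∀ i : ℕ, (fun x => (bad μ v c L).indicator (1 : (ℕ → α) → ℝ) (T^[i] x)) =
      (T^[i] ⁻¹' (bad μ v c L)).indicator 1 := fun i => rfl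
  have hmi : ∀ i : ℕ, MeasurableSet (T^[i] ⁻¹' (bad μ v c L)) := fun i =>
    (hmp i).measurable (meas_bad μ v c L)
  have hIntg : ∀ i : ℕ,
      Integrable (fun x => (bad μ v c L).indicator (1 : (ℕ → α) → ℝ) (T^[i] x)) μ := by
    intro i
    rw [hind]
    exact (integrable_const (1:ℝ)).indicator (hmi i)
  have hval : ∀ i : ℕ, ∫ x, (bad μ v c L).indicator (1 : (ℕ → α) → ℝ) (T^[i] x) ∂μ
      = μ.real (bad μ v c L) := by
    intro i
    rw [hind, integral_indicator_one (hmi i), Measure.real, Measure.real,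
      (hmp i).measure_preimage (meas_bad μ v c L).nullMeasurableSet]
  have hsum : Integrable (fun x => ∑ i ∈ Finset.range N,
      (bad μ v c L).indicator (1 : (ℕ → α) → ℝ) (T^[i] x)) μ :=
    integrable_finsetSum _ fun i _ => hIntg i
  have hsum2 : Integrable (fun x => ∑ i ∈ Finset.range N,
      (bad μ v c L).indicator (1 : (ℕ → α) → ℝ) (T^[i] x) + (L : ℝ)) μ :=
    hsum.add (integrable_const _)
  calc ∫ x, -Real.logb 2 (qw (fun i : Fin N => x i)) ∂μ
      ≤ ∫ x, (c * N + Real.logb 2 (2 * (Fintype.card α : ℝ)) *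
      (∑ i ∈ Finset.range N, (bad μ v c L).indicator 1 (T^[i] x) + L)) ∂μ := by
        refine integral_mono ?_ ?_ ?_
        · have : Integrable (fun w => -Real.logb 2 (qw w))
            (μ.map (fun x : ℕ → α => fun i : Fin N => x i)) := Integrable.of_finite
          exact this.comp_measurable (meas_res N)
        · exact (integrable_const _).add (hsum2.const_mul _)
        · intro x
          simp only [hloc]
          exact q_lower μ v hv c hc0 L N x
    _ = _ := by
        rw [integral_add (integrable_const _) (hsum2.const_mul _),
          integral_const_mul, integral_const_mul, integral_add hsum (integrable_const _),
          integral_finsetSum _ fun i _ => hIntg i]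
        simp [hval]

lemma H_le (μ : Measure (ℕ → α)) [IsProbabilityMeasure μ] [Nonempty α]
    (hT : MeasurePreserving (T : (ℕ → α) → _) μ μ) (v : ℕ → ℝ)
    (hv : ∀ n, 0 ≤ v n) (hs : ∀ n, ∑ k ∈ Finset.range n, v (k + 1) ≤ 1 / 2) (c : ℝ)
    (hc0 : 0 ≤ c) {H : ℝ}
    (hH : Tendsto (fun n : ℕ => (1 / (n : ℝ)) * -∑ w, pw μ n w * Real.logb 2 (pw μ n w))
      atTop (nhds H))
    (hgood : ∀ᵐ x ∂μ, ∃ n : ℕ, 1 ≤ n ∧ (2:ℝ) ^ (-(c * n)) ≤ v n * P μ n x) : H ≤ c := by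
  set B := Real.logb 2 (2 * (Fintype.card α : ℝ))
  have h1 : ∀ L : ℕ, H ≤ c + B * μ.real (bad μ v c L) := by
    intro L
    have hlim : Tendsto (fun n : ℕ => (c + B * μ.real (bad μ v c L)) + B * L / (n:ℝ)) atTop
        (nhds ((c + B * μ.real (bad μ v c L)) + 0)) :=
      tendsto_const_nhds.add (tendsto_const_div_atTop_nhds_zero_nat _)
    rw [add_zero] at hlim
    refine le_of_tendsto_of_tendsto hH hlim ?_
    filter_upwards [eventually_gt_atTop 0] with n hn
    have hn' : (0:ℝ) < n := by exact_mod_cast hn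
    have := entropy_le μ hT v hv hs c hc0 L n
    calc _ ≤ (1 / (n : ℝ)) * (c * n + B * (n * μ.real (bad μ v c L) + L)) := by gcongr
      _ = _ := by field_simp; ring
  have h2 : Tendsto (fun L => μ (bad μ v c L)) atTop (nhds (μ (⋂ L, bad μ v c L))) := by
    refine tendsto_measure_iInter_atTop (fun L => (meas_bad μ v c L).nullMeasurableSet) ?_
      ⟨0, measure_ne_top _ _⟩
    intro a b hab x hx n hn1 hn2
    exact hx n hn1 (hn2.trans hab)
  have h3 : μ (⋂ L, bad μ v c L) = 0 := by
    rw [measure_eq_zero_iff_ae_notMem]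
    filter_upwards [hgood] with x ⟨n, hn1, hn⟩ hx
    exact absurd (Set.mem_iInter.1 hx n n hn1 le_rfl) (not_lt.2 hn)
  rw [h3] at h2
  have h4 : Tendsto (fun L => μ.real (bad μ v c L)) atTop (nhds 0) := by
    have := (ENNReal.tendsto_toReal zero_ne_top).comp h2
    simpa [Measure.real, Function.comp_def] using this
  have h5 : Tendsto (fun L => c + B * μ.real (bad μ v c L)) atTop (nhds (c + B * 0)) :=
    tendsto_const_nhds.add (h4.const_mul _)
  simpa using ge_of_tendsto' h5 h1

/-- the set where cylinder probabilities are infinitely often large -/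
def A (μ : Measure (ℕ → α)) (c : ℝ) : Set (ℕ → α) :=
  {x | ∃ K : ℕ, ∀ M : ℕ, ∃ n : ℕ, M ≤ n ∧ (2:ℝ) ^ (-(c * n + K)) ≤ P μ n x}

lemma meas_A (μ : Measure (ℕ → α)) (c : ℝ) : MeasurableSet (A μ c) := by
  have : A μ c = ⋃ K : ℕ, ⋂ M : ℕ, ⋃ n : ℕ, ⋃ (_ : M ≤ n),
      {x | (2:ℝ) ^ (-(c * n + K)) ≤ P μ n x} := by
    ext x; simp [A]
  rw [this]
  refine MeasurableSet.iUnion fun K => MeasurableSet.iInter fun M => MeasurableSet.iUnion fun n =>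
    MeasurableSet.iUnion fun _ => ?_
  exact measurableSet_le measurable_const (meas_P μ n)

lemma P_T (μ : Measure (ℕ → α)) [IsProbabilityMeasure μ]
    (hT : MeasurePreserving (T : (ℕ → α) → _) μ μ) (n : ℕ) (x : ℕ → α) :
    P μ (n + 1) x ≤ P μ n (T x) := by
  unfold P pw
  have hm : MeasurableSet {y : ℕ → α | ∀ i : Fin n, y i = T x i} := by
    have : {y : ℕ → α | ∀ i : Fin n, y i = T x i} =
      (fun (y : ℕ → α) (i : Fin n) => y i) ⁻¹' {fun i : Fin n => T x i} := by
      ext y; simp [funext_iff]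
    rw [this]
    exact meas_res n (measurableSet_singleton _)
  rw [← hT.measure_preimage hm.nullMeasurableSet]
  refine ENNReal.toReal_mono (measure_ne_top _ _) (measure_mono ?_)
  intro y hy i
  exact hy i.succ

lemma A_sub (μ : Measure (ℕ → α)) [IsProbabilityMeasure μ]
    (hT : MeasurePreserving (T : (ℕ → α) → _) μ μ) (c : ℝ) : A μ c ⊆ T ⁻¹' (A μ c) := by
  rintro x ⟨K, hK⟩
  refine ⟨K + ⌈c⌉₊, fun M => ?_⟩
  obtain ⟨n, hn, h⟩ := hK (M + 1)
  obtain ⟨m, rfl⟩ : ∃ m, n = m + 1 := ⟨n - 1, by omega⟩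
  refine ⟨m, by omega, le_trans ?_ (h.trans (P_T μ hT m x))⟩
  refine Real.rpow_le_rpow_of_exponent_le (by norm_num) ?_
  have := Nat.le_ceil c
  push_cast
  linarith

lemma exists_weight (δ : ℝ) (hδ : 0 < δ) : ∃ v : ℕ → ℝ, (∀ n, 0 ≤ v n) ∧
    (∀ n, ∑ k ∈ Finset.range n, v (k + 1) ≤ 1 / 2) ∧
    ∃ M : ℕ, ∀ n, M ≤ n → (2:ℝ) ^ (-(δ * n)) ≤ v n := by
  set r : ℝ := (2:ℝ) ^ (-(δ / 2)) with hr
  have hr0 : 0 < r := by positivity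
  have hr1 : r < 1 := Real.rpow_lt_one_of_one_lt_of_neg (by norm_num) (by linarith)
  refine ⟨fun n => (1 - r) / 2 * r ^ n, fun n => ?_, fun n => ?_, ?_⟩
  · have : 0 < 1 - r := by linarith
    positivity
  · have h : (1 - r) * ∑ k ∈ Finset.range n, r ^ k = 1 - r ^ n := by
      rw [mul_comm, geom_sum_mul_neg]
    have : ∑ k ∈ Finset.range n, (1 - r) / 2 * r ^ (k + 1) =
        r / 2 * ((1 - r) * ∑ k ∈ Finset.range n, r ^ k) := by
      rw [Finset.mul_sum, Finset.mul_sum]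
      refine Finset.sum_congr rfl fun k _ => ?_
      ring
    rw [this, h]
    have := pow_pos hr0 n
    nlinarith [mul_pos hr0 this]
  · obtain ⟨M, hM⟩ := exists_pow_lt_of_lt_one (show 0 < (1 - r) / 2 by linarith) hr1
    refine ⟨M, fun n hn => ?_⟩
    have : (2:ℝ) ^ (-(δ * n)) = r ^ n * r ^ n := by
      rw [← pow_add, hr, ← Real.rpow_natCast, ← Real.rpow_mul (by norm_num)]
      congr 1
      push_cast
      ring
    rw [this]
    have := pow_le_pow_of_le_one hr0.le hr1.le hn
    have : r ^ n ≤ (1 - r) / 2 := by linarith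
    exact mul_le_mul_of_nonneg_right this (by positivity)

lemma A_null (μ : Measure (ℕ → α)) [IsProbabilityMeasure μ] [Nonempty α]
    (hT : Ergodic (T : (ℕ → α) → _) μ) {H : ℝ}
    (hH : Tendsto (fun n : ℕ => (1 / (n : ℝ)) * -∑ w, pw μ n w * Real.logb 2 (pw μ n w))
      atTop (nhds H)) (c : ℝ) (hc0 : 0 ≤ c) (hcH : c < H) : ∀ᵐ x ∂μ, x ∉ A μ c := by
  rcases hT.ae_empty_or_univ_of_ae_le_preimage (meas_A μ c).nullMeasurableSet
    (LE.le.eventuallyLE (A_sub μ hT.toMeasurePreserving c))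
    with h | h
  · filter_upwards [h] with x hx hx'
    have : (x ∈ A μ c) = (x ∈ (∅ : Set (ℕ → α))) := hx
    rw [this] at hx'
    exact hx'
  · exfalso
    set δ := (H - c) / 4 with hδ
    have hδ0 : 0 < δ := by rw [hδ]; linarith
    obtain ⟨v, hv, hs, M, hM⟩ := exists_weight δ hδ0
    have := H_le μ hT.toMeasurePreserving v hv hs (c + 2 * δ) (by linarith) hH ?_
    · linarith
    · filter_upwards [h] with x hx
      have hx : (x ∈ A μ c) = (x ∈ (Set.univ : Set (ℕ → α))) := hx
      have hx' : x ∈ A μ c := by rw [hx]; trivial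
      obtain ⟨K, hK⟩ := hx'
      obtain ⟨M', hM'⟩ := exists_nat_gt (K / δ)
      obtain ⟨n, hn, hP⟩ := hK (M + M' + 1)
      refine ⟨n, by omega, ?_⟩
      have h1 := hM n (by omega)
      have h2 : (2:ℝ) ^ (-(δ * n)) * (2:ℝ) ^ (-(c * n + K)) ≤ v n * P μ n x :=
        mul_le_mul h1 hP (by positivity) (hv n)
      refine le_trans ?_ h2
      rw [← Real.rpow_add (by norm_num)]
      refine Real.rpow_le_rpow_of_exponent_le (by norm_num) ?_
      rw [div_lt_iff₀ hδ0] at hM'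
      have : (M':ℝ) ≤ n := by exact_mod_cast (by omega : M' ≤ n)
      nlinarith

def enc : List Bool → ℕ
  | [] => 1
  | b :: l => 2 * enc l + b.toNat

lemma enc_pos (l : List Bool) : 1 ≤ enc l := by
  induction l with
  | nil => simp [enc]
  | cons b l ih => simp only [enc]; omega

lemma enc_inj : Function.Injective enc := by
  intro l
  induction l with
  | nil =>
    intro m h
    cases m with
    | nil => rfl
    | cons b m =>
      simp only [enc] at h
      have := enc_pos m
      omega
  | cons b l ih =>
    intro m h
    cases m with
    | nil =>
      simp only [enc] at h
      have := enc_pos l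
      omega
    | cons b' m =>
      simp only [enc] at h
      have h1 := Bool.toNat_lt b
      have h2 := Bool.toNat_lt b'
      have h3 : enc l = enc m := by omega
      have h4 : b.toNat = b'.toNat := by omega
      rw [ih h3]
      cases b <;> cases b' <;> simp_all

lemma enc_lt (l : List Bool) : enc l < 2 ^ (l.length + 1) := by
  induction l with
  | nil => simp [enc]
  | cons b l ih =>
    simp only [enc, List.length_cons]
    have h1 := Bool.toNat_lt b
    rw [pow_succ]
    omega

lemma card_short {ι : Type*} [Fintype ι] (g : ι → List Bool) (hg : Function.Injective g) (r : ℝ)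
    (s : Finset ι) (hs : ∀ i ∈ s, ((g i).length : ℝ) < r) :
    (s.card : ℝ) ≤ 2 * (2:ℝ) ^ r := by
  rcases s.eq_empty_or_nonempty with h | ⟨i, hi⟩
  · rw [h]; simp; positivity
  have hr : 0 ≤ r := (Nat.cast_nonneg _).trans (hs i hi).le
  have h1 : s.card ≤ 2 ^ (⌊r⌋₊ + 1) := by
    have := Finset.card_le_card_of_injOn (s := s) (t := Finset.range (2 ^ (⌊r⌋₊ + 1)))
      (fun i => enc (g i)) (fun i hi => by
        have h2 : (g i).length ≤ ⌊r⌋₊ := Nat.le_floor (hs i hi).le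
        simp only [Finset.coe_range, Set.mem_Iio]
        exact (enc_lt _).trans_le (Nat.pow_le_pow_right (by norm_num) (by omega)))
      (enc_inj.comp hg).injOn
    simpa using this
  calc (s.card : ℝ) ≤ ((2 ^ (⌊r⌋₊ + 1) : ℕ) : ℝ) := by exact_mod_cast h1
    _ = 2 * (2:ℝ) ^ (⌊r⌋₊ : ℝ) := by rw [Real.rpow_natCast]; push_cast; ring
    _ ≤ _ := by
      gcongr
      · norm_num
      · exact Nat.floor_le hr

lemma ae_code (μ : Measure (ℕ → α)) [IsProbabilityMeasure μ]
    (γ : ∀ n : ℕ, (Fin n → α) → List Bool) (hγ : ∀ n, Function.Injective (γ n))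
    (c d : ℝ) (hcd : c < d) : ∀ᵐ x ∂μ, ∀ᶠ n : ℕ in atTop,
      ¬ (((γ n (fun i : Fin n => x i)).length : ℝ) < c * n ∧ P μ n x < (2:ℝ) ^ (-(d * n))) := by
  classical
  set r : ℝ := (2:ℝ) ^ (c - d)
  have hr0 : 0 < r := by positivity
  have hr1 : r < 1 := Real.rpow_lt_one_of_one_lt_of_neg (by norm_num) (by linarith)
  have key : ∀ n : ℕ, μ {x | ((γ n (fun i : Fin n => x i)).length : ℝ) < c * n ∧
      P μ n x < (2:ℝ) ^ (-(d * n))} ≤ ENNReal.ofReal (2 * r ^ n) := by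
    intro n
    set s : Finset (Fin n → α) := Finset.univ.filter fun w =>
      ((γ n w).length : ℝ) < c * n ∧ pw μ n w < (2:ℝ) ^ (-(d * n)) with hs
    have hsub : {x | ((γ n (fun i : Fin n => x i)).length : ℝ) < c * n ∧
      P μ n x < (2:ℝ) ^ (-(d * n))} ⊆ ⋃ w ∈ s, {y : ℕ → α | ∀ i : Fin n, y i = w i} := by
      intro x hx
      simp only [Set.mem_iUnion]
      refine ⟨fun i => x i, ?_, fun i => rfl⟩
      simp only [hs, Finset.mem_filter, Finset.mem_univ, true_and]
      exact hx
    refine (measure_mono hsub).trans ((measure_biUnion_finset_le s _).trans ?_)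
    have h1 : ∑ w ∈ s, μ {y : ℕ → α | ∀ i : Fin n, y i = w i} =
        ENNReal.ofReal (∑ w ∈ s, pw μ n w) := by
      rw [ENNReal.ofReal_sum_of_nonneg fun w _ => pw_nonneg μ n w]
      refine Finset.sum_congr rfl fun w _ => ?_
      rw [pw, ENNReal.ofReal_toReal (measure_ne_top _ _)]
    rw [h1]
    refine ENNReal.ofReal_le_ofReal ?_
    have h2 : ∑ w ∈ s, pw μ n w ≤ s.card * (2:ℝ) ^ (-(d * n)) := by
      rw [← nsmul_eq_mul]
      refine Finset.sum_le_card_nsmul _ _ _ fun w hw => ?_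
      simp only [hs, Finset.mem_filter] at hw
      exact hw.2.2.le
    have h3 := card_short (γ n) (hγ n) (c * n) s (fun w hw => by
      simp only [hs, Finset.mem_filter] at hw
      exact hw.2.1)
    calc _ ≤ s.card * (2:ℝ) ^ (-(d * n)) := h2
      _ ≤ 2 * (2:ℝ) ^ (c * n) * (2:ℝ) ^ (-(d * n)) := by gcongr
      _ = 2 * r ^ n := by
        rw [mul_assoc, ← Real.rpow_add (by norm_num), ← Real.rpow_natCast,
          ← Real.rpow_mul (by norm_num)]
        congr 2
        ring
  have hsum : Summable (fun n : ℕ => 2 * r ^ n) :=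
    (summable_geometric_of_lt_one hr0.le hr1).mul_left 2
  have hfin : ∑' n : ℕ, μ {x | ((γ n (fun i : Fin n => x i)).length : ℝ) < c * n ∧
      P μ n x < (2:ℝ) ^ (-(d * n))} ≠ ∞ := by
    refine ne_top_of_le_ne_top ?_ (ENNReal.tsum_le_tsum key)
    exact hsum.tsum_ofReal_ne_top
  exact ae_eventually_notMem hfin

lemma ae_c (μ : Measure (ℕ → α)) [IsProbabilityMeasure μ] [Nonempty α]
    (hT : Ergodic (T : (ℕ → α) → _) μ) {H : ℝ}
    (hH : Tendsto (fun n : ℕ => (1 / (n : ℝ)) * -∑ w, pw μ n w * Real.logb 2 (pw μ n w))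
      atTop (nhds H))
    (γ : ∀ n : ℕ, (Fin n → α) → List Bool) (hγ : ∀ n, Function.Injective (γ n))
    (c : ℝ) (hcH : c < H) : ∀ᵐ x ∂μ, ENNReal.ofReal c ≤
      atTop.liminf (fun n : ℕ =>
        ((γ n (fun i : Fin n => x i)).length : ℝ≥0∞) / (n : ℝ≥0∞)) := by
  rcases le_or_gt c 0 with hc | hc
  · simp [ENNReal.ofReal_of_nonpos hc]
  set d := (c + H) / 2 with hd
  filter_upwards [A_null μ hT hH d (by linarith) (by linarith),
    ae_code μ γ hγ c d (by linarith)] with x hx hx2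
  have hx3 : ∀ᶠ n : ℕ in atTop, P μ n x < (2:ℝ) ^ (-(d * n)) := by
    simp only [A, Set.mem_ofPred_eq, not_exists, not_forall, not_and, not_le] at hx
    obtain ⟨M, hM⟩ := hx 0
    filter_upwards [eventually_ge_atTop M] with n hn
    simpa using hM n hn
  refine le_liminf_of_le (by isBoundedDefault) ?_
  filter_upwards [hx2, hx3, eventually_gt_atTop 0] with n h1 h2 hn
  have h3 : c * n ≤ ((γ n (fun i : Fin n => x i)).length : ℝ) := by
    by_contra h
    exact h1 ⟨not_le.1 h, h2⟩
  rw [ENNReal.le_div_iff_mul_le (Or.inl (by exact_mod_cast hn.ne')) (Or.inl (by simp))]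
  rw [← ENNReal.ofReal_natCast n, ← ENNReal.ofReal_mul hc.le, ← ENNReal.ofReal_natCast]
  exact ENNReal.ofReal_le_ofReal h3

end OS

/-- Ornstein–Shields inequality: for any stationary ergodic source with entropy
rate `H` over a finite alphabet (modelled as a shift-ergodic probability measure
`μ` on `ℕ → α`) and any one-to-one code sequence `γ`, almost surely
`liminf_n ‖γ(x_1,…,x_n)‖ / n ≥ H`. -/
theorem ornstein_shields_inequality {α : Type*} [Fintype α] [MeasurableSpace α]
    [MeasurableSingletonClass α]
    (μ : Measure (ℕ → α)) [IsProbabilityMeasure μ]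
    (herg : Ergodic (fun x : ℕ → α => fun n => x (n + 1)) μ)
    {H : ℝ}
    (hH : Tendsto (fun n : ℕ =>
        (1 / (n : ℝ)) * -∑ w : Fin n → α,
          (μ {y | ∀ i : Fin n, y i = w i}).toReal *
            Real.logb 2 ((μ {y | ∀ i : Fin n, y i = w i}).toReal))
      atTop (nhds H))
    (γ : ∀ n : ℕ, (Fin n → α) → List Bool) (hγ : ∀ n, Function.Injective (γ n)) :
    ∀ᵐ x ∂μ, ENNReal.ofReal H ≤
      atTop.liminf (fun n : ℕ =>
        ((γ n (fun i : Fin n => x i)).length : ℝ≥0∞) / (n : ℝ≥0∞)) := by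
  have hne : Nonempty α := by
    obtain ⟨x⟩ := μ.nonempty_of_neZero
    exact ⟨x 0⟩
  have h : ∀ k : ℕ, ∀ᵐ x ∂μ, ENNReal.ofReal (H - 1 / ((k : ℝ) + 1)) ≤
      atTop.liminf (fun n : ℕ =>
        ((γ n (fun i : Fin n => x i)).length : ℝ≥0∞) / (n : ℝ≥0∞)) := fun k =>
    OS.ae_c μ herg hH γ hγ _ (by
      have : (0:ℝ) < 1 / ((k : ℝ) + 1) := by positivity
      linarith)
  filter_upwards [ae_all_iff.2 h] with x hx
  have hl : Tendsto (fun k : ℕ => ENNReal.ofReal (H - 1 / ((k : ℝ) + 1))) atTop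
      (nhds (ENNReal.ofReal (H - 0))) :=
    ENNReal.tendsto_ofReal (tendsto_const_nhds.sub tendsto_one_div_add_atTop_nhds_zero_nat)
  rw [sub_zero] at hl
  exact le_of_tendsto' hl hx
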